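/- For the Solecki ideal 𝒮: non(M_𝒮) = non(K_𝒮) = max{𝔟, cov_ω(𝒩)} and cov(M_𝒮) = cov(K_𝒮) = min{𝔡, non(𝒩)}. -/

import Mathlib

open Cardinal Filter Set
open scoped ENNReal

noncomputable section

/-- An ideal on a (countable) set `X`, in the sense of the paper: a proper family of
subsets of `X` closed under taking subsets and finite unions and containing all
finite subsets of `X`. -/
structure IsIdealOn {X : Type} (I : Set (Set X)) : Prop where
  subset_mem : ∀ ⦃A B : Set X⦄, A ⊆ B → B ∈ I → A ∈ I
  union_mem : ∀ ⦃A B : Set X⦄, A ∈ I → B ∈ I → A ∪ B ∈ I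
  finite_mem : ∀ ⦃A : Set X⦄, A.Finite → A ∈ I
  proper : (univ : Set X) ∉ I

/-- The finite initial segment `x ↾ n` of `x : X^ω`, as a list (an element of `X^{<ω}`). -/
def seg {X : Type} (x : ℕ → X) (n : ℕ) : List X := (List.range n).map x

/-- The `I`-Miller null ideal `M_I`: the σ-ideal on `X^ω` generated by the sets
`M_φ = {x | ∀^∞ n, x n ∈ φ (x ↾ n)}`, where `φ : X^{<ω} → I`.  (A set is in the
generated σ-ideal iff it is covered by countably many generators.) -/
def MIdeal {X : Type} (I : Set (Set X)) : Set (Set (ℕ → X)) :=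
  {A | ∃ φ : ℕ → List X → Set X, (∀ n s, φ n s ∈ I) ∧
    A ⊆ ⋃ n, {x : ℕ → X | ∀ᶠ m in atTop, x m ∈ φ n (seg x m)}}

/-- The σ-ideal `K_I` on `X^ω` generated by the sets
`K_φ = {x | ∀^∞ n, x n ∈ φ n}`, where `φ : ω → I`. -/
def KIdeal {X : Type} (I : Set (Set X)) : Set (Set (ℕ → X)) :=
  {A | ∃ φ : ℕ → ℕ → Set X, (∀ n m, φ n m ∈ I) ∧
    A ⊆ ⋃ n, {x : ℕ → X | ∀ᶠ m in atTop, x m ∈ φ n m}}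

/-- Additivity `add(J)` of a (σ-)ideal `J`: the least cardinality of a subfamily of `J`
whose union is not in `J`. -/
def addIdeal {Y : Type} (J : Set (Set Y)) : Cardinal :=
  sInf {c | ∃ 𝒜 : Set (Set Y), 𝒜 ⊆ J ∧ ⋃₀ 𝒜 ∉ J ∧ Cardinal.mk 𝒜 = c}

/-- Covering number `cov(J)`: the least cardinality of a subfamily of `J` covering `Y`. -/
def covIdeal {Y : Type} (J : Set (Set Y)) : Cardinal :=
  sInf {c | ∃ 𝒜 : Set (Set Y), 𝒜 ⊆ J ∧ ⋃₀ 𝒜 = Set.univ ∧ Cardinal.mk 𝒜 = c}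

/-- Uniformity `non(J)`: the least cardinality of a subset of `Y` not in `J`. -/
def nonIdeal {Y : Type} (J : Set (Set Y)) : Cardinal :=
  sInf {c | ∃ S : Set Y, S ∉ J ∧ Cardinal.mk S = c}

/-- Cofinality `cof(J)`: the least cardinality of a cofinal (w.r.t. `⊆`) subfamily of `J`. -/
def cofIdeal {Y : Type} (J : Set (Set Y)) : Cardinal :=
  sInf {c | ∃ 𝒜 : Set (Set Y), 𝒜 ⊆ J ∧ (∀ B ∈ J, ∃ A ∈ 𝒜, B ⊆ A) ∧ Cardinal.mk 𝒜 = c}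

/-- `f ≤* g`: eventual domination on `ω^ω`. -/
def LeStar (f g : ℕ → ℕ) : Prop := ∀ᶠ n in atTop, f n ≤ g n

/-- The bounding number `𝔟`. -/
def bNum : Cardinal :=
  sInf {c | ∃ F : Set (ℕ → ℕ), (∀ g : ℕ → ℕ, ∃ f ∈ F, ¬ LeStar f g) ∧ Cardinal.mk F = c}

/-- The dominating number `𝔡`. -/
def dNum : Cardinal :=
  sInf {c | ∃ F : Set (ℕ → ℕ), (∀ f : ℕ → ℕ, ∃ g ∈ F, LeStar f g) ∧ Cardinal.mk F = c}

/-- `A ⊆* B`: almost inclusion (`A \ B` finite). -/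
def AlSub {X : Type} (A B : Set X) : Prop := (A \ B).Finite

/-- The set of cardinalities of witnessing families for `add*_ω(I)`: families `𝒜 ⊆ I`
such that for every countable `B̄ ⊆ I` some `A ∈ 𝒜` satisfies `A ⊄* B` for all `B ∈ B̄`.
`add*_ω(I)` is the minimum of this set (`∞` if it is empty). -/
def addStarOmegaFam {X : Type} (I : Set (Set X)) : Set Cardinal :=
  {c | ∃ 𝒜 : Set (Set X), 𝒜 ⊆ I ∧
    (∀ B : ℕ → Set X, (∀ n, B n ∈ I) → ∃ A ∈ 𝒜, ∀ n, ¬ AlSub A (B n)) ∧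
    Cardinal.mk 𝒜 = c}

/-- The set of cardinalities of witnessing families for `cof*_ω(I)`: families `𝒜` of
countable subsets of `I` such that for every countable `B̄ ⊆ I` there is `Ā ∈ 𝒜` with:
every `B ∈ B̄` satisfies `B ⊆* A` for some `A ∈ Ā`.  `cof*_ω(I)` is the minimum. -/
def cofStarOmegaFam {X : Type} (I : Set (Set X)) : Set Cardinal :=
  {c | ∃ 𝒜 : Set (Set (Set X)), (∀ As ∈ 𝒜, As.Countable ∧ As ⊆ I) ∧
    (∀ B : ℕ → Set X, (∀ n, B n ∈ I) → ∃ As ∈ 𝒜, ∀ n, ∃ A ∈ As, AlSub (B n) A) ∧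
    Cardinal.mk 𝒜 = c}

/-- The set of cardinalities of witnessing families for `non*_ω(I)`: families `𝒜` of
infinite subsets of `X` such that for every countable `B̄ ⊆ I` there is `A ∈ 𝒜` with
`A ∩ B` finite for all `B ∈ B̄`.  `non*_ω(I)` is the minimum of this set. -/
def nonStarOmegaFam {X : Type} (I : Set (Set X)) : Set Cardinal :=
  {c | ∃ 𝒜 : Set (Set X), (∀ A ∈ 𝒜, A.Infinite) ∧
    (∀ B : ℕ → Set X, (∀ n, B n ∈ I) → ∃ A ∈ 𝒜, ∀ n, (A ∩ B n).Finite) ∧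
    Cardinal.mk 𝒜 = c}

/-- The set of cardinalities of witnessing families for `cov*(I)`: families `𝒜 ⊆ I` such
that every infinite `B ⊆ X` has infinite intersection with some member of `𝒜`.
`cov*(I)` is the minimum of this set (`∞` if it is empty, i.e. if `I` is not tall). -/
def covStarFam {X : Type} (I : Set (Set X)) : Set Cardinal :=
  {c | ∃ 𝒜 : Set (Set X), 𝒜 ⊆ I ∧
    (∀ B : Set X, B.Infinite → ∃ A ∈ 𝒜, (A ∩ B).Infinite) ∧ Cardinal.mk 𝒜 = c}

/-- The set of cardinalities of witnessing families for `non*(I)`: families `𝒜` of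
infinite subsets of `X` such that every `B ∈ I` has finite intersection with some
member of `𝒜`.  `non*(I)` is the minimum of this set. -/
def nonStarFam {X : Type} (I : Set (Set X)) : Set Cardinal :=
  {c | ∃ 𝒜 : Set (Set X), (∀ A ∈ 𝒜, A.Infinite) ∧
    (∀ B ∈ I, ∃ A ∈ 𝒜, (A ∩ B).Finite) ∧ Cardinal.mk 𝒜 = c}

/-- The meager ideal of the product space `X^ω`, where `X` carries the discrete
topology (for countable `X` this is a Polish space). -/
def meagerIdeal (X : Type) : Set (Set (ℕ → X)) :=
  letI : TopologicalSpace X := ⊥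
  {A : Set (ℕ → X) | IsMeagre A}

/-- The Fubini product `I ⊗ J` of two ideals. -/
def Fubini {X Y : Type} (I : Set (Set X)) (J : Set (Set Y)) : Set (Set (X × Y)) :=
  {A | {x : X | {y : Y | (x, y) ∈ A} ∉ J} ∈ I}

/-- The ideal `Fin` of finite subsets of `X`. -/
def finIdeal (X : Type) : Set (Set X) := {A : Set X | A.Finite}

/-- The nowhere dense ideal on `2^{<ω}`: `A` belongs to it iff for every `s` there is an
extension `t ⊇ s` none of whose extensions belongs to `A`. -/
def nwdIdeal : Set (Set (List Bool)) :=
  {A | ∀ s : List Bool, ∃ t : List Bool, s <+: t ∧ ∀ u : List Bool, t <+: u → u ∉ A}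

/-- A submeasure: monotone, finitely subadditive, vanishing on `∅`. -/
def IsSubmeasure (φ : Set ℕ → ℝ≥0∞) : Prop :=
  φ ∅ = 0 ∧ (∀ A B : Set ℕ, A ⊆ B → φ A ≤ φ B) ∧ ∀ A B : Set ℕ, φ (A ∪ B) ≤ φ A + φ B

/-- `I` is gradually fragmented: there are a partition `⟨P n⟩` of `ω` into nonempty finite
sets and submeasures `φ n` with `A ∈ I ↔ sup_n φ n (A ∩ P n) < ∞`, together with
`f : ω → ω` such that for all `n, i`, for all but finitely many `j`: any family of at
most `i` subsets of `P j`, each of `φ j`-value `≤ n`, has union of `φ j`-value `≤ f n`. -/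
def GraduallyFragmented (I : Set (Set ℕ)) : Prop :=
  ∃ (P : ℕ → Set ℕ) (φ : ℕ → Set ℕ → ℝ≥0∞) (f : ℕ → ℕ),
    (∀ n, (P n).Finite) ∧ (∀ n, (P n).Nonempty) ∧
    (∀ n m, n ≠ m → Disjoint (P n) (P m)) ∧ (⋃ n, P n) = Set.univ ∧
    (∀ n, IsSubmeasure (φ n)) ∧
    (∀ A : Set ℕ, A ∈ I ↔ (⨆ n, φ n (A ∩ P n)) < ⊤) ∧
    (∀ n i : ℕ, ∀ᶠ j in atTop, ∀ ℬ : Finset (Set ℕ), ℬ.card ≤ i →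
      (∀ B ∈ ℬ, B ⊆ P j) → (∀ B ∈ ℬ, φ j B ≤ (n : ℝ≥0∞)) →
      φ j (⋃ B ∈ ℬ, B) ≤ ((f n : ℕ) : ℝ≥0∞))

/-- The basic clopen cylinder of `2^ω` determined by a finite binary string. -/
def cylSet (s : List Bool) : Set (ℕ → Bool) :=
  {x | ∀ i : Fin s.length, x i.val = s.get i}

/-- `A ⊆ 2^ω` is null for the uniform (coin-flipping) product measure: for every `ε > 0`
it is covered by countably many cylinders of total weight `≤ ε` (the cylinder of a
string `s` has weight `2^{-|s|}`). -/
def IsNullCantor (A : Set (ℕ → Bool)) : Prop :=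
  ∀ ε : ℝ≥0∞, 0 < ε → ∃ s : ℕ → List Bool,
    A ⊆ (⋃ n, cylSet (s n)) ∧ (∑' n : ℕ, (2⁻¹ : ℝ≥0∞) ^ (s n).length) ≤ ε

/-- Coordinatewise addition modulo 2 on `2^ω`. -/
def xorAdd (x y : ℕ → Bool) : ℕ → Bool := fun n => xor (x n) (y n)

/-- The transitive additivity `add_t(𝒩)` of the null ideal of `2^ω`:
`min {|A| : A ⊆ 2^ω ∧ ∃ X ∈ 𝒩, A + X ∉ 𝒩}`. -/
def addTNull : Cardinal :=
  sInf {c | ∃ A : Set (ℕ → Bool),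
    (∃ N : Set (ℕ → Bool), IsNullCantor N ∧ ¬ IsNullCantor (Set.image2 xorAdd A N)) ∧
    Cardinal.mk A = c}

/-- Kada's cardinal invariant `𝔩`: the least `κ` such that for every `g ∈ ω^ω` there is a
family `𝒮`, of size `κ`, of slaloms `S` with `S i ⊆ {0, …, g i}` and `|S i| ≤ i`, such
that every `f ≤* g` satisfies `f ∈* S` for some `S ∈ 𝒮`. -/
def lNum : Cardinal :=
  sInf {c : Cardinal | ∀ g : ℕ → ℕ, ∃ 𝒮 : Set (ℕ → Finset ℕ),
    (∀ S ∈ 𝒮, ∀ i : ℕ, S i ⊆ Finset.range (g i + 1) ∧ (S i).card ≤ i) ∧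
    (∀ f : ℕ → ℕ, LeStar f g → ∃ S ∈ 𝒮, ∀ᶠ i in atTop, f i ∈ S i) ∧
    Cardinal.mk 𝒮 = c}

/-- Membership in `C ⊆ 2^ω` only depends on the first `n` coordinates. -/
def DeterminedBy (C : Set (ℕ → Bool)) (n : ℕ) : Prop :=
  ∀ x y : ℕ → Bool, (∀ i < n, x i = y i) → (x ∈ C ↔ y ∈ C)

/-- Extension of a finite binary string by `false`s. -/
def extendFalse {n : ℕ} (s : Fin n → Bool) : ℕ → Bool :=
  fun i => if h : i < n then s ⟨i, h⟩ else false

/-- `C ⊆ 2^ω` has uniform product measure `1/2`: for some `n`, membership in `C` depends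
only on the first `n` coordinates and exactly half of the `2^n` cylinders of level `n`
are included in `C`. -/
def HalfMeasure (C : Set (ℕ → Bool)) : Prop :=
  ∃ n : ℕ, DeterminedBy C n ∧
    2 * Nat.card {s : Fin n → Bool // extendFalse s ∈ C} = 2 ^ n

/-- Clopenness in the Cantor space `2^ω` (`Bool` discrete, product topology). -/
def IsClopenCantor (C : Set (ℕ → Bool)) : Prop :=
  letI : TopologicalSpace Bool := ⊥
  IsClopen C

/-- Closedness in the Cantor space `2^ω`. -/
def IsClosedCantor (C : Set (ℕ → Bool)) : Prop :=
  letI : TopologicalSpace Bool := ⊥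
  IsClosed C

/-- `Ω`: the (countable) set of clopen subsets of `2^ω` of measure `1/2`. -/
abbrev SoleckiBase : Type := {C : Set (ℕ → Bool) // IsClopenCantor C ∧ HalfMeasure C}

/-- The Solecki ideal `𝒮` on `Ω`: the ideal generated by the sets
`I_y = {C ∈ Ω : y ∈ C}` for `y ∈ 2^ω`. -/
def SoleckiIdeal : Set (Set SoleckiBase) :=
  {A | ∃ F : Finset (ℕ → Bool), A ⊆ ⋃ y ∈ F, {C : SoleckiBase | y ∈ C.val}}

/-- `cov_ω(𝒩)`: the least cardinality of a family of Lebesgue-null sets of reals such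
that every countable set of reals is contained in one of them. -/
def covOmegaNull : Cardinal :=
  sInf {c | ∃ 𝒜 : Set (Set ℝ), (∀ N ∈ 𝒜, MeasureTheory.volume N = 0) ∧
    (∀ B : Set ℝ, B.Countable → ∃ N ∈ 𝒜, B ⊆ N) ∧ Cardinal.mk 𝒜 = c}

/-- `non(𝒩)`: the least cardinality of a non-null set of reals. -/
def nonNullReal : Cardinal :=
  sInf {c | ∃ S : Set ℝ, MeasureTheory.volume S ≠ 0 ∧ Cardinal.mk S = c}

/-- The eventually different ideal `ℰ𝒟` on `ω × ω`. -/
def EDIdeal : Set (Set (ℕ × ℕ)) :=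
  {A | ∃ k : ℕ, ∀ᶠ n in atTop,
    {m : ℕ | (n, m) ∈ A}.Finite ∧ {m : ℕ | (n, m) ∈ A}.ncard ≤ k}

/-- Characteristic function identifying `P(ω)` with `2^ω`. -/
def chiSet (A : Set ℕ) : ℕ → Bool :=
  fun n => @decide (n ∈ A) (Classical.propDecidable _)

/-- `I ⊆ P(ω)` is `F_σ`: under the identification `P(ω) ≅ 2^ω`, `I` is a countable
union of closed subsets of the Cantor space. -/
def IsFSigmaIdeal (I : Set (Set ℕ)) : Prop :=
  ∃ C : ℕ → Set (ℕ → Bool), (∀ n, IsClosedCantor (C n)) ∧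
    ∀ A : Set ℕ, A ∈ I ↔ chiSet A ∈ ⋃ n, C n

/-- The underlying countable set of `Fin^{⊗(n+1)}`: `FinPowType 0 = ω`,
`FinPowType (n+1) = ω × FinPowType n`. -/
def FinPowType : ℕ → Type
  | 0 => ℕ
  | n + 1 => ℕ × FinPowType n

/-- The iterated Fubini power of `Fin`: `FinPowIdeal 0 = Fin`, and
`FinPowIdeal (n+1) = Fin ⊗ FinPowIdeal n`; thus `Fin^{⊗k} = FinPowIdeal (k-1)`. -/
def FinPowIdeal : (n : ℕ) → Set (Set (FinPowType n))
  | 0 => finIdeal ℕ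
  | n + 1 => Fubini (finIdeal ℕ) (FinPowIdeal n)

/-- `π` `k`-constantly bounding-predicts `f`: for all but finitely many `i` there is
`j ∈ [i, i + k)` with `f j ≤ π (f ↾ j)`. -/
def ConstBddPred (k : ℕ) (π : List ℕ → ℕ) (f : ℕ → ℕ) : Prop :=
  ∀ᶠ i in atTop, ∃ j : ℕ, i ≤ j ∧ j < i + k ∧ f j ≤ π (seg f j)

/-- The constant bounding evasion number `𝔢^const_≤(k)`. -/
def eConstLe (k : ℕ) : Cardinal :=
  sInf {c | ∃ F : Set (ℕ → ℕ),
    (∀ π : List ℕ → ℕ, ∃ f ∈ F, ¬ ConstBddPred k π f) ∧ Cardinal.mk F = c}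

/-- The constant bounding prediction number `𝔳^const_≤(k)`. -/
def vConstLe (k : ℕ) : Cardinal :=
  sInf {c | ∃ Ps : Set (List ℕ → ℕ),
    (∀ f : ℕ → ℕ, ∃ π ∈ Ps, ConstBddPred k π f) ∧ Cardinal.mk Ps = c}

/-- The asymptotic density zero ideal `𝒵` on `ω`. -/
def densityZero : Set (Set ℕ) :=
  {A : Set ℕ | Tendsto (fun n : ℕ => ((A ∩ Iio n).ncard : ℝ) / (n : ℝ)) atTop (nhds (0 : ℝ))}

/-- The σ-ideal `ℰ` on `2^ω` generated by the closed null sets. -/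
def EIdeal : Set (Set (ℕ → Bool)) :=
  {A | ∃ C : ℕ → Set (ℕ → Bool),
    (∀ n, IsClosedCantor (C n) ∧ IsNullCantor (C n)) ∧ A ⊆ ⋃ n, C n}

/-!
All four cardinals on the right are the numbers `𝔟` and `𝔡` of two relational systems: `≤*`, and
the system in which a countable set of reals *escapes* a null set when it is not contained in it.
Both lie Tukey above the membership system of `K_𝒮`, hence above that of the larger ideal `M_𝒮`:

* coding `Ω` by `ω` turns a bound for `f` into a sequence of finite sets, which belong to `𝒮`;
* for `x ∈ Ω^ω`, the sets of those `q ∈ (2^ω)^ω` with `q_j ∉ x_n` for all `j < n` have measures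
  `2^{-n}`, so by Borel–Cantelli almost every `q` meets almost every `x_n` within its first `n`
  coordinates. If a countable set `{b_i}` escapes the exceptional null set, then `x` is captured by
  the members `{C | ∃ i ≤ n, ∃ j < n, b_i(j) ∈ C}` of `𝒮`.

Conversely, a null set `N ⊆ 2^ω` yields `D ∈ Ω^ω` such that every `y ∈ N` lies in only finitely many
`D_n`: take `D_n` disjoint from the union of the cylinders of level `n` inside an open `U ⊇ N` of
measure less than `1/2`. A set in `M_𝒮` involves only countably many points of `2^ω`. If `N`
contains them, each `φ(s)` contains `D_m` for only finitely many `m`, so the `f` for which `D ∘ f`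
lies in the given set are branches of countably many finitely branching trees and are bounded by a
single `g`. Hence a sequential combination of the two systems lies Tukey below `M_𝒮`; its `𝔟` is at
most the maximum of theirs, and its `𝔡` at least the minimum.

Null sets of different measures are compared through quasi-measure-preserving maps: the cumulative
distribution function carries an atomless probability measure to the uniform one on `[0, 1]`, and
the latter maps onto every probability measure on a standard Borel space.
-/

section Tukey

universe u

variable {α β γ δ α' β' : Type u}

/-- The bounding number `𝔟(r)` of a relational system `(α, β, r)`. -/
def unboundedNum (r : α → β → Prop) : Cardinal :=
  sInf {c | ∃ S : Set α, (∀ b, ∃ a ∈ S, ¬ r a b) ∧ #S = c}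

/-- The dominating number `𝔡(r)` of a relational system `(α, β, r)`. -/
def dominatingNum (r : α → β → Prop) : Cardinal :=
  sInf {c | ∃ T : Set β, (∀ a, ∃ b ∈ T, r a b) ∧ #T = c}

/-- The dual relational system, which exchanges `𝔟` and `𝔡`. -/
def dualRel (r : α → β → Prop) (b : β) (a : α) : Prop := ¬ r a b

/-- The Tukey order on relational systems, oriented so that `TukeyLE r s` yields
`𝔡(r) ≤ 𝔡(s)` and `𝔟(s) ≤ 𝔟(r)`. -/
def TukeyLE (r : α → β → Prop) (s : α' → β' → Prop) : Prop :=
  ∃ φ : α → α', ∃ ψ : β' → β, ∀ a b', s (φ a) b' → r a (ψ b')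

/-- The dual of the sequential composition of relational systems: a response `(b, g)` meets a
challenge `(a, c)` if `b` meets `a` or `g a` meets `c`. As `g` may depend on `a`, this is easier to
meet than the plain disjunction of `r` and `s`. -/
def orSeq (r : α → β → Prop) (s : γ → δ → Prop) (p : α × γ) (q : β × (α → δ)) : Prop :=
  r p.1 q.1 ∨ s p.2 (q.2 p.1)

variable {r : α → β → Prop} {s : γ → δ → Prop} {r' : α' → β' → Prop}

lemma dominatingNum_le_mk {T : Set β} (hT : ∀ a, ∃ b ∈ T, r a b) : dominatingNum r ≤ #T :=
  csInf_le' ⟨T, hT, rfl⟩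

lemma exists_mk_eq_dominatingNum (hr : ∀ a, ∃ b, r a b) :
    ∃ T : Set β, (∀ a, ∃ b ∈ T, r a b) ∧ #T = dominatingNum r :=
  csInf_mem (s := {c | ∃ T : Set β, (∀ a, ∃ b ∈ T, r a b) ∧ #T = c})
    ⟨_, univ, by simpa only [mem_univ, true_and] using hr, rfl⟩

lemma unboundedNum_le_mk {S : Set α} (hS : ∀ b, ∃ a ∈ S, ¬ r a b) : unboundedNum r ≤ #S :=
  dominatingNum_le_mk (r := dualRel r) hS

lemma exists_mk_eq_unboundedNum (hr : ∀ b, ∃ a, ¬ r a b) :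
    ∃ S : Set α, (∀ b, ∃ a ∈ S, ¬ r a b) ∧ #S = unboundedNum r :=
  exists_mk_eq_dominatingNum (r := dualRel r) hr

namespace TukeyLE

lemma trans {s : γ → δ → Prop} (h : TukeyLE r r') (h' : TukeyLE r' s) : TukeyLE r s := by
  obtain ⟨φ, ψ, h⟩ := h
  obtain ⟨φ', ψ', h'⟩ := h'
  exact ⟨φ' ∘ φ, ψ ∘ ψ', fun a b hab => h a _ (h' _ b hab)⟩

lemma dual (h : TukeyLE r r') : TukeyLE (dualRel r') (dualRel r) := by
  obtain ⟨φ, ψ, h⟩ := h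
  exact ⟨ψ, φ, fun b a => mt (h a b)⟩

lemma exists_rel (h : TukeyLE r r') (hr' : ∀ a, ∃ b, r' a b) (a : α) : ∃ b, r a b := by
  obtain ⟨φ, ψ, h⟩ := h
  obtain ⟨b, hb⟩ := hr' (φ a)
  exact ⟨ψ b, h a b hb⟩

lemma exists_not_rel (h : TukeyLE r r') (hr : ∀ b, ∃ a, ¬ r a b) (b : β') : ∃ a, ¬ r' a b :=
  h.dual.exists_rel hr b

lemma dominatingNum_le (h : TukeyLE r r') (hr' : ∀ a, ∃ b, r' a b) :
    dominatingNum r ≤ dominatingNum r' := by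
  obtain ⟨T, hT, hcard⟩ := exists_mk_eq_dominatingNum hr'
  obtain ⟨φ, ψ, h⟩ := h
  have hψT : ∀ a, ∃ b ∈ ψ '' T, r a b := fun a =>
    let ⟨b, hbT, hb⟩ := hT (φ a)
    ⟨ψ b, mem_image_of_mem ψ hbT, h a b hb⟩
  exact ((dominatingNum_le_mk hψT).trans mk_image_le).trans_eq hcard

lemma unboundedNum_le (h : TukeyLE r r') (hr : ∀ b, ∃ a, ¬ r a b) :
    unboundedNum r' ≤ unboundedNum r :=
  h.dual.dominatingNum_le hr

lemma orSeq_left (h : TukeyLE r r') (s : γ → δ → Prop) : TukeyLE (orSeq r s) (orSeq r' s) := by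
  obtain ⟨φ, ψ, h⟩ := h
  exact ⟨fun p => (φ p.1, p.2), fun q => (ψ q.1, q.2 ∘ φ), fun p q => Or.imp (h p.1 q.1) id⟩

end TukeyLE

lemma unboundedNum_orSeq_le (hr : ∀ b, ∃ a, ¬ r a b) (hs : ∀ d, ∃ c, ¬ s c d) :
    unboundedNum (orSeq r s) ≤ unboundedNum r * unboundedNum s := by
  obtain ⟨S, hS, hS_card⟩ := exists_mk_eq_unboundedNum hr
  obtain ⟨S', hS', hS'_card⟩ := exists_mk_eq_unboundedNum hs
  have hprod : ∀ q, ∃ p ∈ S ×ˢ S', ¬ orSeq r s p q := by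
    rintro ⟨b, g⟩
    obtain ⟨a, haS, ha⟩ := hS b
    obtain ⟨c, hcS', hc⟩ := hS' (g a)
    exact ⟨(a, c), ⟨haS, hcS'⟩, not_or.2 ⟨ha, hc⟩⟩
  calc unboundedNum (orSeq r s) ≤ #(S ×ˢ S') := unboundedNum_le_mk hprod
    _ = unboundedNum r * unboundedNum s := by rw [mk_setProd, hS_card, hS'_card]

lemma exists_not_orSeq (hr : ∀ b, ∃ a, ¬ r a b) (hs : ∀ d, ∃ c, ¬ s c d) (q : β × (α → δ)) :
    ∃ p, ¬ orSeq r s p q := by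
  obtain ⟨a, ha⟩ := hr q.1
  obtain ⟨c, hc⟩ := hs (q.2 a)
  exact ⟨(a, c), not_or.2 ⟨ha, hc⟩⟩

lemma min_dominatingNum_le_dominatingNum_orSeq (h : ∀ p, ∃ q, orSeq r s p q) :
    min (dominatingNum r) (dominatingNum s) ≤ dominatingNum (orSeq r s) := by
  obtain ⟨T, hT, hcard⟩ := exists_mk_eq_dominatingNum h
  rw [← hcard]
  by_cases hr : ∀ a, ∃ b ∈ Prod.fst '' T, r a b
  · exact min_le_of_left_le ((dominatingNum_le_mk hr).trans mk_image_le)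
  · push Not at hr
    obtain ⟨a, ha⟩ := hr
    have hs : ∀ c, ∃ d ∈ (fun q : β × (α → δ) => q.2 a) '' T, s c d := fun c => by
      obtain ⟨q, hqT, hq⟩ := hT (a, c)
      exact ⟨q.2 a, ⟨q, hqT, rfl⟩, hq.resolve_left (ha q.1 ⟨q, hqT, rfl⟩)⟩
    exact min_le_of_right_le ((dominatingNum_le_mk hs).trans mk_image_le)

section Sandwich

variable {μ ν κ ξ : Type u} {m : μ → ν → Prop} {k : κ → ξ → Prop}

theorem unboundedNum_eq_max_of_tukeyLE (hm : TukeyLE (orSeq r s) m) (hmk : TukeyLE m k)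
    (hkr : TukeyLE k r) (hks : TukeyLE k s) (hr : ∀ b, ∃ a, ¬ r a b) (hs : ∀ d, ∃ c, ¬ s c d)
    (hs_inf : ℵ₀ ≤ unboundedNum s) :
    unboundedNum m = max (unboundedNum r) (unboundedNum s) ∧
      unboundedNum k = max (unboundedNum r) (unboundedNum s) := by
  have hm_unb := hm.exists_not_rel (exists_not_orSeq hr hs)
  have hk_unb := hmk.exists_not_rel hm_unb
  have hlow : max (unboundedNum r) (unboundedNum s) ≤ unboundedNum k :=
    max_le (hkr.unboundedNum_le hk_unb) (hks.unboundedNum_le hk_unb)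
  have hmid : unboundedNum k ≤ unboundedNum m := hmk.unboundedNum_le hm_unb
  have hhigh : unboundedNum m ≤ max (unboundedNum r) (unboundedNum s) :=
    ((hm.unboundedNum_le (exists_not_orSeq hr hs)).trans (unboundedNum_orSeq_le hr hs)).trans
      (mul_le_max_of_aleph0_le_right hs_inf)
  exact ⟨hhigh.antisymm (hlow.trans hmid), (hmid.trans hhigh).antisymm hlow⟩

theorem dominatingNum_eq_min_of_tukeyLE (hm : TukeyLE (orSeq r s) m) (hmk : TukeyLE m k)
    (hkr : TukeyLE k r) (hks : TukeyLE k s) (hr : ∀ a, ∃ b, r a b) (hs : ∀ c, ∃ d, s c d) :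
    dominatingNum m = min (dominatingNum r) (dominatingNum s) ∧
      dominatingNum k = min (dominatingNum r) (dominatingNum s) := by
  have hk_dom := hkr.exists_rel hr
  have hm_dom := hmk.exists_rel hk_dom
  have hhigh : dominatingNum k ≤ min (dominatingNum r) (dominatingNum s) :=
    le_min (hkr.dominatingNum_le hr) (hks.dominatingNum_le hs)
  have hmid : dominatingNum m ≤ dominatingNum k := hmk.dominatingNum_le hk_dom
  have hlow : min (dominatingNum r) (dominatingNum s) ≤ dominatingNum m :=
    (min_dominatingNum_le_dominatingNum_orSeq (hm.exists_rel hm_dom)).trans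
      (hm.dominatingNum_le hm_dom)
  exact ⟨(hmid.trans hhigh).antisymm hlow, hhigh.antisymm (hlow.trans hmid)⟩

end Sandwich

lemma unboundedNum_subtype_eq_sInf (p : α → Prop) (r : α → β → Prop) :
    unboundedNum (fun (a : Subtype p) b => r a b) =
      sInf {c | ∃ S : Set α, (∀ a ∈ S, p a) ∧ (∀ b, ∃ a ∈ S, ¬ r a b) ∧ #S = c} := by
  refine congr_arg sInf (Set.ext fun c => ⟨?_, ?_⟩)
  · rintro ⟨S, hS, rfl⟩
    refine ⟨Subtype.val '' S, ?_, fun b => ?_, mk_image_eq Subtype.val_injective⟩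
    · rintro _ ⟨a, -, rfl⟩
      exact a.2
    · obtain ⟨a, haS, ha⟩ := hS b
      exact ⟨a, mem_image_of_mem _ haS, ha⟩
  · rintro ⟨S, hSp, hS, rfl⟩
    refine ⟨Subtype.val ⁻¹' S, fun b => ?_, ?_⟩
    · obtain ⟨a, haS, ha⟩ := hS b
      exact ⟨⟨a, hSp a haS⟩, haS, ha⟩
    · rw [mk_preimage_of_injective_of_subset_range _ S Subtype.val_injective]
      exact fun a haS => ⟨⟨a, hSp a haS⟩, rfl⟩

lemma dominatingNum_subtype_eq_sInf (p : β → Prop) (r : α → β → Prop) :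
    dominatingNum (fun a (b : Subtype p) => r a b) =
      sInf {c | ∃ T : Set β, (∀ b ∈ T, p b) ∧ (∀ a, ∃ b ∈ T, r a b) ∧ #T = c} := by
  simpa only [unboundedNum, dominatingNum, dualRel, not_not] using
    unboundedNum_subtype_eq_sInf p (dualRel r)

end Tukey

section Ideals

variable {X Y : Type}

/-- Membership of points of `Y` in the elements of a family `J`, as a relational system: its
bounding and dominating numbers are `non(J)` and `cov(J)`. -/
def memRel (J : Set (Set Y)) (y : Y) (A : {A : Set Y // A ∈ J}) : Prop := y ∈ A.1

lemma nonIdeal_eq_unboundedNum {J : Set (Set Y)} (hJ : IsLowerSet J) :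
    nonIdeal J = unboundedNum (memRel J) := by
  have hnotMem : ∀ S : Set Y, S ∉ J ↔ ∀ A : {A // A ∈ J}, ∃ y ∈ S, ¬ memRel J y A := fun S =>
    ⟨fun hS A => not_subset.1 fun hSA => hS (hJ hSA A.2), fun h hS =>
      let ⟨_, hyS, hy⟩ := h ⟨S, hS⟩
      hy hyS⟩
  simp only [nonIdeal, unboundedNum, hnotMem]

lemma covIdeal_eq_dominatingNum (J : Set (Set Y)) : covIdeal J = dominatingNum (memRel J) := by
  simp only [covIdeal, sUnion_eq_univ_iff]
  exact (dominatingNum_subtype_eq_sInf (· ∈ J) fun y A => y ∈ A).symm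

lemma tukeyLE_memRel_of_subset {J J' : Set (Set Y)} (h : J' ⊆ J) :
    TukeyLE (memRel J) (memRel J') :=
  ⟨id, fun A => ⟨A.1, h A.2⟩, fun _ _ => id⟩

variable {I : Set (Set X)}

lemma isLowerSet_MIdeal (I : Set (Set X)) : IsLowerSet (MIdeal I) :=
  fun _ _ hBA ⟨φ, hφ, hA⟩ => ⟨φ, hφ, hBA.trans hA⟩

lemma isLowerSet_KIdeal (I : Set (Set X)) : IsLowerSet (KIdeal I) :=
  fun _ _ hBA ⟨φ, hφ, hA⟩ => ⟨φ, hφ, hBA.trans hA⟩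

lemma seg_length (x : ℕ → X) (n : ℕ) : (seg x n).length = n := by
  simp only [seg, List.length_map, List.length_range]

lemma KIdeal_subset_MIdeal (I : Set (Set X)) : KIdeal I ⊆ MIdeal I := by
  rintro A ⟨φ, hφ, hA⟩
  exact ⟨fun n s => φ n s.length, fun n s => hφ n _, by simpa only [seg_length] using hA⟩

lemma setOf_eventually_mem_mem_KIdeal {φ : ℕ → Set X} (hφ : ∀ m, φ m ∈ I) :
    {x : ℕ → X | ∀ᶠ m in atTop, x m ∈ φ m} ∈ KIdeal I :=
  ⟨fun _ => φ, fun _ => hφ, by rw [iUnion_const]⟩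

lemma tukeyLE_KIdeal_leStar [Countable X] (hI : ∀ A : Set X, A.Finite → A ∈ I) :
    TukeyLE (memRel (KIdeal I)) LeStar := by
  obtain ⟨code, hcode⟩ := Countable.exists_injective_nat X
  have hfin : ∀ (g : ℕ → ℕ) m, {a | code a ≤ g m} ∈ I := fun g m =>
    hI _ ((finite_Iic (g m)).preimage hcode.injOn)
  exact ⟨fun x => code ∘ x, fun g => ⟨_, setOf_eventually_mem_mem_KIdeal (hfin g)⟩,
    fun _ _ => id⟩

end Ideals

section Bounding

lemma leStar_refl (f : ℕ → ℕ) : LeStar f f := Eventually.of_forall fun _ => le_rfl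

lemma not_leStar_add_one (g : ℕ → ℕ) : ¬ LeStar (fun n => g n + 1) g := fun h =>
  let ⟨n, hn⟩ := h.exists
  (Nat.lt_succ_self (g n)).not_ge hn

lemma aleph0_le_unboundedNum_leStar : ℵ₀ ≤ unboundedNum LeStar := by
  obtain ⟨S, hS, hcard⟩ := exists_mk_eq_unboundedNum fun g => ⟨_, not_leStar_add_one g⟩
  rw [← hcard, Cardinal.aleph0_le_mk_iff, Set.infinite_coe_iff]
  intro hfin
  obtain ⟨f, hfS, hf⟩ := hS (hfin.toFinset.sup id)
  have hle : f ≤ hfin.toFinset.sup id := Finset.le_sup (f := id) (hfin.mem_toFinset.2 hfS)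
  exact hf (Eventually.of_forall hle)

lemma seg_succ {X : Type} (x : ℕ → X) (n : ℕ) : seg x (n + 1) = seg x n ++ [x n] := by
  simp only [seg, List.range_succ, List.map_append, List.map_cons, List.map_nil]

lemma seg_comp {X Y : Type} (D : X → Y) (f : ℕ → X) (n : ℕ) :
    seg (D ∘ f) n = (seg f n).map D := by
  simp only [seg, List.map_map]

/-- The `n`-th level of the finitely branching tree whose nodes `u` branch into the values up to
`max c (π u)`. -/
def branchLevel (π : List ℕ → ℕ) (c : ℕ) : ℕ → Finset (List ℕ)
  | 0 => {[]}
  | n + 1 => (branchLevel π c n).biUnion fun u =>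
      (Finset.range (max c (π u) + 1)).image fun j => u ++ [j]

lemma seg_mem_branchLevel {π : List ℕ → ℕ} {c : ℕ} {f : ℕ → ℕ}
    (hf : ∀ n, f n ≤ max c (π (seg f n))) (n : ℕ) : seg f n ∈ branchLevel π c n := by
  induction n with
  | zero => exact Finset.mem_singleton_self _
  | succ n ih =>
    rw [branchLevel, Finset.mem_biUnion]
    exact ⟨_, ih, Finset.mem_image.2
      ⟨f n, Finset.mem_range.2 (Nat.lt_succ_of_le (hf n)), (seg_succ f n).symm⟩⟩

lemma exists_le_max_of_eventually_le {f h : ℕ → ℕ} (hfh : LeStar f h) :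
    ∃ c, ∀ n, f n ≤ max c (h n) := by
  obtain ⟨N, hN⟩ := eventually_atTop.1 hfh
  refine ⟨(Finset.range N).sup f, fun n => ?_⟩
  rcases lt_or_ge n N with hn | hn
  · exact le_max_of_le_left (Finset.le_sup (Finset.mem_range.2 hn))
  · exact le_max_of_le_right (hN n hn)

lemma exists_leStar_of_predicted (π : List ℕ → ℕ) :
    ∃ g, ∀ f : ℕ → ℕ, LeStar f (fun n => π (seg f n)) → LeStar f g := by
  set levelMax : ℕ → ℕ → ℕ := fun c n => max c ((branchLevel π c n).sup π)
  refine ⟨fun n => (Finset.range (n + 1)).sup (levelMax · n), fun f hf => ?_⟩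
  obtain ⟨c, hc⟩ := exists_le_max_of_eventually_le hf
  filter_upwards [eventually_ge_atTop c] with n hn
  calc f n ≤ max c (π (seg f n)) := hc n
    _ ≤ levelMax c n := max_le_max le_rfl (Finset.le_sup (seg_mem_branchLevel hc n))
    _ ≤ (Finset.range (n + 1)).sup (levelMax · n) :=
      Finset.le_sup (f := (levelMax · n)) (Finset.mem_range.2 (Nat.lt_succ_of_le hn))

lemma exists_leStar_of_seg_finite {X : Type} {D : ℕ → X} {φ : ℕ → List X → Set X}
    (hφ : ∀ k u, (D ⁻¹' φ k u).Finite) :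
    ∃ g, ∀ (f : ℕ → ℕ) (k : ℕ),
      (∀ᶠ m in atTop, D (f m) ∈ φ k (seg (D ∘ f) m)) → LeStar f g := by
  set π : List ℕ → ℕ := fun u =>
    (Finset.range (u.length + 1)).sup fun k => (hφ k (u.map D)).toFinset.sup id
  obtain ⟨g, hg⟩ := exists_leStar_of_predicted π
  refine ⟨g, fun f k hf => hg f ?_⟩
  filter_upwards [hf, eventually_ge_atTop k] with m hm hkm
  have hfm : f m ∈ (hφ k ((seg f m).map D)).toFinset := by
    rwa [Finite.mem_toFinset, mem_preimage, ← seg_comp]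
  have hk : k ∈ Finset.range ((seg f m).length + 1) :=
    Finset.mem_range.2 (by rw [seg_length]; exact Nat.lt_succ_of_le hkm)
  exact (Finset.le_sup (f := id) hfm).trans
    (Finset.le_sup (f := fun k => (hφ k ((seg f m).map D)).toFinset.sup id) hk)

end Bounding

section Transport

open MeasureTheory ProbabilityTheory
open scoped unitInterval

lemma continuous_cdf (μ : Measure ℝ) [IsProbabilityMeasure μ] [NullSingletonClass μ] :
    Continuous (cdf μ) := by
  refine continuous_iff_continuousAt.2 fun x => continuousAt_iff_continuous_left'_right'.2
    ⟨(monotone_cdf μ).continuousWithinAt_Iio_iff_leftLim_eq.2 ?_,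
      ((cdf μ).right_continuous x).mono Ioi_subset_Ici_self⟩
  have hjump : ENNReal.ofReal (cdf μ x - Function.leftLim (cdf μ) x) = 0 := by
    rw [← StieltjesFunction.measure_singleton, measure_cdf, measure_singleton]
  exact ((monotone_cdf μ).leftLim_le le_rfl).antisymm
    (sub_nonpos.1 (ENNReal.ofReal_eq_zero.1 hjump))

lemma exists_cdf_eq (μ : Measure ℝ) [IsProbabilityMeasure μ] [NullSingletonClass μ] {t : ℝ}
    (ht0 : 0 < t) (ht1 : t < 1) : ∃ x, cdf μ x = t :=
  mem_range_of_exists_le_of_exists_ge (continuous_cdf μ)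
    ((tendsto_cdf_atBot μ).eventually_le_const ht0).exists
    ((tendsto_cdf_atTop μ).eventually_const_le ht1).exists

lemma measureReal_cdf_le (μ : Measure ℝ) [IsProbabilityMeasure μ] [NullSingletonClass μ] {u : ℝ}
    (hu : u ∈ I) : μ.real {x | cdf μ x ≤ u} = u := by
  refine le_antisymm (le_of_forall_gt_imp_ge_of_dense fun t ht => ?_)
    (le_of_forall_lt_imp_le_of_dense fun t ht => ?_)
  · rcases lt_or_ge t 1 with ht1 | ht1
    · obtain ⟨x, rfl⟩ := exists_cdf_eq μ (hu.1.trans_lt ht) ht1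
      have hsub : {y | cdf μ y ≤ u} ⊆ Iic x := fun y hy =>
        ((monotone_cdf μ).reflect_lt (lt_of_le_of_lt hy ht)).le
      exact (measureReal_mono hsub).trans_eq (cdf_eq_real μ x).symm
    · exact measureReal_le_one.trans ht1
  · rcases lt_or_ge 0 t with ht0 | ht0
    · obtain ⟨x, rfl⟩ := exists_cdf_eq μ ht0 (ht.trans_le hu.2)
      have hsub : Iic x ⊆ {y | cdf μ y ≤ u} := fun y hy => (monotone_cdf μ hy).trans ht.le
      exact (cdf_eq_real μ x).trans_le (measureReal_mono hsub)
    · exact ht0.trans measureReal_nonneg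

lemma exists_measurePreserving_real_unitInterval (μ : Measure ℝ) [IsProbabilityMeasure μ]
    [NullSingletonClass μ] : ∃ f : ℝ → I, MeasurePreserving f μ volume := by
  set f : ℝ → I := fun x => ⟨cdf μ x, cdf_nonneg μ x, cdf_le_one μ x⟩
  have hf : Measurable f := (monotone_cdf μ).measurable.subtype_mk
  have : IsProbabilityMeasure (μ.map f) := Measure.isProbabilityMeasure_map hf.aemeasurable
  refine ⟨f, hf, Measure.ext_of_Iic _ _ fun u => ?_⟩
  rw [Measure.map_apply hf measurableSet_Iic, unitInterval.volume_Iic, ← ofReal_measureReal]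
  exact congr_arg _ (measureReal_cdf_le μ u.2)

variable {X Y : Type*} [MeasurableSpace X] [StandardBorelSpace X] [MeasurableSpace Y]
  [StandardBorelSpace Y]

lemma exists_measurePreserving_unitInterval (μ : Measure X) [IsProbabilityMeasure μ]
    [NullSingletonClass μ] : ∃ f : X → I, MeasurePreserving f μ volume := by
  have he := measurableEmbedding_embeddingReal X
  have : IsProbabilityMeasure (μ.map (embeddingReal X)) :=
    Measure.isProbabilityMeasure_map he.measurable.aemeasurable
  have : NullSingletonClass (μ.map (embeddingReal X)) := ⟨fun x => by
    rw [he.map_apply]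
    exact (subsingleton_singleton.preimage he.injective).measure_zero μ⟩
  obtain ⟨f, hf⟩ := exists_measurePreserving_real_unitInterval (μ.map (embeddingReal X))
  exact ⟨_, hf.comp ⟨he.measurable, rfl⟩⟩

lemma exists_quasiMeasurePreserving (μ : Measure X) [SFinite μ] [NeZero μ] [NullSingletonClass μ]
    (ν : Measure Y) [SFinite ν] [NeZero ν] : ∃ f : X → Y, Measure.QuasiMeasurePreserving f μ ν := by
  have : NullSingletonClass μ.toFinite :=
    ⟨fun x => toFinite_absolutelyContinuous μ (measure_singleton x)⟩
  obtain ⟨f, hf⟩ := exists_measurePreserving_unitInterval μ.toFinite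
  have : Nonempty Y := ν.nonempty_of_neZero
  obtain ⟨g, hg, hg_map⟩ := ν.toFinite.exists_measurable_map_eq
  exact ⟨g ∘ f, (MeasurePreserving.comp ⟨hg, hg_map⟩ hf).quasiMeasurePreserving.mono
    (absolutelyContinuous_toFinite μ) (toFinite_absolutelyContinuous ν)⟩

end Transport

section Escape

open MeasureTheory ProbabilityTheory

universe u

lemma mk_biUnion_countable_le {X : Type u} {T : Set {B : Set X // B.Countable}}
    (hT : ¬ (⋃ B ∈ T, B.1).Countable) : #(⋃ B ∈ T, B.1 : Set X) ≤ #T := by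
  have hmax : #(⋃ B ∈ T, B.1 : Set X) ≤ max #T ℵ₀ :=
    calc #(⋃ B ∈ T, B.1 : Set X) ≤ #T * ⨆ B : T, #B.1.1 := mk_biUnion_le _ _
      _ ≤ #T * ℵ₀ := by gcongr; exact ciSup_le' fun B => le_aleph0_iff_set_countable.2 B.1.2
      _ ≤ max #T ℵ₀ := mul_le_max_of_aleph0_le_right le_rfl
  exact (le_max_iff.1 hmax).resolve_right (mt le_aleph0_iff_set_countable.1 hT)

variable {X Y : Type u} [MeasurableSpace X] [MeasurableSpace Y] {μ : Measure X} {ν : Measure Y}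

/-- The relational system of `μ`-null sets failing to cover countable sets: for Lebesgue measure,
its bounding and dominating numbers are `cov_ω(𝒩)` and `non(𝒩)`. -/
def escapeRel (μ : Measure X) (N : {N : Set X // μ N = 0}) (B : {B : Set X // B.Countable}) :
    Prop :=
  ¬ B.1 ⊆ N.1

lemma exists_escapeRel [NeZero μ] (N : {N : Set X // μ N = 0}) :
    ∃ B, escapeRel μ N B := by
  obtain ⟨y, hy⟩ : ∃ y, y ∉ N.1 := by
    by_contra! h
    exact NeZero.ne μ (Measure.measure_univ_eq_zero.1 (eq_univ_of_forall h ▸ N.2))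
  exact ⟨⟨{y}, countable_singleton y⟩, fun h => hy (h rfl)⟩

lemma exists_not_escapeRel [NullSingletonClass μ] (B : {B : Set X // B.Countable}) :
    ∃ N, ¬ escapeRel μ N B :=
  ⟨⟨B, B.2.measure_zero μ⟩, not_not_intro subset_rfl⟩

lemma unboundedNum_escapeRel (μ : Measure X) :
    unboundedNum (escapeRel μ) = sInf {c | ∃ 𝒜 : Set (Set X), (∀ N ∈ 𝒜, μ N = 0) ∧
      (∀ B : Set X, B.Countable → ∃ N ∈ 𝒜, B ⊆ N) ∧ #𝒜 = c} := by
  have h : unboundedNum (escapeRel μ) = _ := unboundedNum_subtype_eq_sInf (μ · = 0)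
    fun N (B : {B : Set X // B.Countable}) => ¬ B.1 ⊆ N
  simpa only [not_not, Subtype.forall] using h

lemma dominatingNum_escapeRel_le_mk {S : Set X} (hS : μ S ≠ 0) :
    dominatingNum (escapeRel μ) ≤ #S := by
  set singletons : Set {B : Set X // B.Countable} := (fun y => ⟨{y}, countable_singleton y⟩) '' S
  have hdom : ∀ N, ∃ B ∈ singletons, escapeRel μ N B := fun N => by
    obtain ⟨y, hyS, hyN⟩ := not_subset.1 fun hSN => hS (measure_mono_null hSN N.2)
    exact ⟨_, mem_image_of_mem _ hyS, fun h => hyN (h rfl)⟩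
  exact (dominatingNum_le_mk hdom).trans mk_image_le

lemma dominatingNum_escapeRel [NeZero μ] [NullSingletonClass μ] :
    dominatingNum (escapeRel μ) = sInf {c | ∃ S : Set X, μ S ≠ 0 ∧ #S = c} := by
  refine le_antisymm ?_ ?_
  · refine le_csInf ⟨_, univ, NeZero.ne (μ univ), rfl⟩ ?_
    rintro _ ⟨S, hS, rfl⟩
    exact dominatingNum_escapeRel_le_mk hS
  · obtain ⟨T, hT, hcard⟩ := exists_mk_eq_dominatingNum (exists_escapeRel (μ := μ))
    have hunion : μ (⋃ B ∈ T, B.1) ≠ 0 := fun h0 => by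
      obtain ⟨B, hBT, hB⟩ := hT ⟨_, h0⟩
      exact hB (subset_biUnion_of_mem (u := Subtype.val) hBT)
    rw [← hcard]
    refine le_trans (csInf_le' ?_) (mk_biUnion_countable_le fun hc => hunion (hc.measure_zero μ))
    exact ⟨_, hunion, rfl⟩

lemma tukeyLE_escapeRel_of_quasiMeasurePreserving {f : X → Y}
    (hf : Measure.QuasiMeasurePreserving f μ ν) : TukeyLE (escapeRel ν) (escapeRel μ) :=
  ⟨fun N => ⟨f ⁻¹' N, hf.preimage_null N.2⟩, fun B => ⟨f '' B, B.2.image f⟩,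
    fun _ _ => mt image_subset_iff.1⟩

lemma tukeyLE_escapeRel [StandardBorelSpace X] [StandardBorelSpace Y] (μ : Measure X) [SFinite μ]
    [NeZero μ] [NullSingletonClass μ] (ν : Measure Y) [SFinite ν] [NeZero ν] :
    TukeyLE (escapeRel ν) (escapeRel μ) :=
  let ⟨_, hf⟩ := exists_quasiMeasurePreserving μ ν
  tukeyLE_escapeRel_of_quasiMeasurePreserving hf

end Escape

section Coin

open MeasureTheory

/-- The uniform product measure on the Cantor space `2^ω`. -/
def coinMeasure : Measure (ℕ → Bool) :=
  Measure.infinitePi fun _ => (PMF.uniformOfFintype Bool).toMeasure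

instance : IsProbabilityMeasure coinMeasure := by
  unfold coinMeasure
  infer_instance

lemma coinMeasure_cylinder (y : ℕ → Bool) (n : ℕ) :
    coinMeasure (PiNat.cylinder y n) = 2⁻¹ ^ n := by
  rw [coinMeasure, PiNat.cylinder_eq_pi,
    Measure.infinitePi_pi _ fun _ _ => measurableSet_singleton _]
  simp only [PMF.toMeasure_apply_singleton _ _ (measurableSet_singleton _),
    PMF.uniformOfFintype_apply, Fintype.card_bool, Nat.cast_ofNat, Finset.prod_const,
    Finset.card_range]

instance : NullSingletonClass coinMeasure where
  measure_singleton y := by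
    refine le_antisymm (ge_of_tendsto' (ENNReal.tendsto_pow_atTop_nhds_zero_of_lt_one
      ENNReal.one_half_lt_one) fun n => ?_) zero_le
    rw [← coinMeasure_cylinder y n]
    exact measure_mono (singleton_subset_iff.2 (PiNat.self_mem_cylinder y n))

lemma mem_cylinder_extendFalse {n : ℕ} {s : Fin n → Bool} {x : ℕ → Bool} :
    x ∈ PiNat.cylinder (extendFalse s) n ↔ (fun i : Fin n => x i) = s := by
  rw [PiNat.mem_cylinder_iff, funext_iff, Fin.forall_iff]
  exact forall₂_congr fun i hi => by rw [extendFalse, dif_pos hi]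

variable {C : Set (ℕ → Bool)} {n : ℕ}

namespace DeterminedBy

lemma mono (hC : DeterminedBy C n) {m : ℕ} (hnm : n ≤ m) : DeterminedBy C m :=
  fun x y hxy => hC x y fun i hi => hxy i (hi.trans_le hnm)

lemma compl (hC : DeterminedBy C n) : DeterminedBy Cᶜ n :=
  fun x y hxy => not_congr (hC x y hxy)

lemma mem_iff_extendFalse_mem (hC : DeterminedBy C n) (x : ℕ → Bool) :
    x ∈ C ↔ extendFalse (fun i : Fin n => x i) ∈ C :=
  hC x _ (PiNat.mem_cylinder_iff.1 (mem_cylinder_extendFalse.2 rfl))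

lemma eq_iUnion_cylinder (hC : DeterminedBy C n) :
    C = ⋃ s : {s : Fin n → Bool // extendFalse s ∈ C}, PiNat.cylinder (extendFalse s.1) n := by
  ext x
  simp only [mem_iUnion, mem_cylinder_extendFalse, Subtype.exists, exists_prop, exists_eq_right']
  exact hC.mem_iff_extendFalse_mem x

lemma isClopen (hC : DeterminedBy C n) : IsClopen C := by
  have hopen : ∀ {D : Set (ℕ → Bool)}, DeterminedBy D n → IsOpen D := fun hD => by
    rw [hD.eq_iUnion_cylinder]
    exact isOpen_iUnion fun _ => PiNat.isOpen_cylinder _ _ _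
  exact ⟨isOpen_compl_iff.1 (hopen hC.compl), hopen hC⟩

lemma coinMeasure_real_eq (hC : DeterminedBy C n) :
    coinMeasure.real C = Nat.card {s : Fin n → Bool // extendFalse s ∈ C} / 2 ^ n := by
  classical
  have hdisj : Pairwise (Function.onFun Disjoint fun s : {s : Fin n → Bool // extendFalse s ∈ C} =>
      PiNat.cylinder (extendFalse s.1) n) := fun s t hst =>
    Set.disjoint_left.2 fun x hs ht => hst <| Subtype.ext <|
      (mem_cylinder_extendFalse.1 hs).symm.trans (mem_cylinder_extendFalse.1 ht)
  have hcyl : ∀ y, coinMeasure.real (PiNat.cylinder y n) = (2 ^ n)⁻¹ := fun y => by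
    simp only [measureReal_def, coinMeasure_cylinder, ENNReal.toReal_pow, ENNReal.toReal_inv,
      ENNReal.toReal_ofNat, inv_pow]
  conv_lhs => rw [hC.eq_iUnion_cylinder]
  rw [measureReal_iUnion_fintype hdisj fun _ => (PiNat.isOpen_cylinder _ _ _).measurableSet]
  simp only [hcyl, Finset.sum_const, Finset.card_univ, Nat.card_eq_fintype_card, nsmul_eq_mul,
    div_eq_mul_inv]

end DeterminedBy

lemma SoleckiBase.isClopen (C : SoleckiBase) : IsClopen C.1 := C.2.1

lemma SoleckiBase.coinMeasure_real_eq (C : SoleckiBase) : coinMeasure.real C.1 = 1 / 2 := by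
  obtain ⟨-, n, hC, hcard⟩ := C.2
  rw [hC.coinMeasure_real_eq, div_eq_div_iff (by positivity) two_ne_zero, one_mul, mul_comm]
  exact_mod_cast hcard

lemma SoleckiBase.coinMeasure_compl (C : SoleckiBase) : coinMeasure C.1ᶜ = 2⁻¹ := by
  have hreal : coinMeasure.real C.1ᶜ = 2⁻¹ := by
    rw [probReal_compl_eq_one_sub C.isClopen.2.measurableSet, C.coinMeasure_real_eq]
    norm_num
  rw [← ofReal_measureReal, hreal, ENNReal.ofReal_inv_of_pos two_pos, ENNReal.ofReal_ofNat]

lemma SoleckiBase.nonempty (C : SoleckiBase) : C.1.Nonempty := by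
  refine nonempty_of_measureReal_ne_zero (μ := coinMeasure) ?_
  rw [C.coinMeasure_real_eq]
  exact one_div_ne_zero two_ne_zero

instance : Countable SoleckiBase := by
  have : Countable (TopologicalSpace.Clopens (ℕ → Bool)) :=
    TopologicalSpace.Clopens.countable_iff_secondCountable.2 inferInstance
  have hinj : Function.Injective fun C : SoleckiBase =>
      (⟨C.1, C.isClopen⟩ : TopologicalSpace.Clopens (ℕ → Bool)) := fun C D h =>
    Subtype.ext (congr_arg TopologicalSpace.Clopens.carrier h)
  exact hinj.countable

lemma exists_soleckiBase_of_card (T : Finset (Fin n → Bool)) (hT : 2 * T.card = 2 ^ n) :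
    ∃ C : SoleckiBase, C.val = {x | (fun i : Fin n => x i) ∈ T} := by
  have hdet : DeterminedBy {x | (fun i : Fin n => x i) ∈ T} n := fun x y hxy => by
    have hrestrict : (fun i : Fin n => x i) = fun i : Fin n => y i := funext fun i => hxy i i.2
    simp only [mem_ofPred_eq, hrestrict]
  have hcard : Nat.card {s : Fin n → Bool // extendFalse s ∈ {x | (fun i : Fin n => x i) ∈ T}} =
      T.card := by
    simp only [mem_ofPred_eq, mem_cylinder_extendFalse.1 (PiNat.self_mem_cylinder _ _),
      Nat.card_eq_fintype_card, Fintype.card_coe]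
  exact ⟨⟨_, hdet.isClopen, n, hdet, by rw [hcard, hT]⟩, rfl⟩

lemma DeterminedBy.exists_soleckiBase_disjoint {E : Set (ℕ → Bool)} (hE : DeterminedBy E n)
    (hE_half : coinMeasure.real E ≤ 1 / 2) : ∃ C : SoleckiBase, Disjoint C.val E := by
  classical
  -- Level `n + 1` rather than `n`, since the single string of level `0` cannot be halved.
  replace hE := hE.mono n.le_succ
  set A : Finset (Fin (n + 1) → Bool) := {s | extendFalse s ∈ E}
  have hA : 2 * A.card ≤ 2 ^ (n + 1) := by
    rw [hE.coinMeasure_real_eq, div_le_div_iff₀ (by positivity) two_pos, one_mul, mul_comm,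
      Nat.card_eq_fintype_card, Fintype.card_subtype] at hE_half
    exact_mod_cast hE_half
  have hA_compl : 2 ^ n ≤ Aᶜ.card := by
    rw [Finset.card_compl, Fintype.card_fun, Fintype.card_bool, Fintype.card_fin]
    omega
  obtain ⟨T, hTA, hT⟩ := Finset.exists_subset_card_eq hA_compl
  obtain ⟨C, hC⟩ := exists_soleckiBase_of_card T (by rw [hT, pow_succ'])
  refine ⟨C, Set.disjoint_left.2 fun x hxC hxE => ?_⟩
  rw [hC] at hxC
  exact Finset.mem_compl.1 (hTA hxC)
    (Finset.mem_filter.2 ⟨Finset.mem_univ _, (hE.mem_iff_extendFalse_mem x).1 hxE⟩)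

end Coin

section Solecki

open MeasureTheory

lemma determinedBy_setOf_cylinder_subset (U : Set (ℕ → Bool)) (n : ℕ) :
    DeterminedBy {x | PiNat.cylinder x n ⊆ U} n := fun x y hxy => by
  simp only [mem_ofPred_eq, PiNat.mem_cylinder_iff_eq.1 (PiNat.mem_cylinder_iff.2 hxy)]

lemma eventually_cylinder_subset {U : Set (ℕ → Bool)} (hU : IsOpen U) {y : ℕ → Bool} (hy : y ∈ U) :
    ∀ᶠ n in atTop, PiNat.cylinder y n ⊆ U := by
  obtain ⟨_, ⟨x, m, rfl⟩, hyx, hxU⟩ :=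
    (PiNat.isTopologicalBasis_cylinders fun _ : ℕ => Bool).exists_subset_of_mem_open hy hU
  filter_upwards [eventually_ge_atTop m] with n hmn
  exact (PiNat.cylinder_anti y hmn).trans ((PiNat.mem_cylinder_iff_eq.1 hyx).trans_subset hxU)

lemma exists_soleckiBase_eventually_notMem {N : Set (ℕ → Bool)} (hN : coinMeasure N = 0) :
    ∃ D : ℕ → SoleckiBase, ∀ y ∈ N, ∀ᶠ n in atTop, y ∉ (D n).val := by
  obtain ⟨U, hNU, hU, hU_half⟩ := N.exists_isOpen_lt_of_lt 2⁻¹ (by rw [hN]; simp)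
  have hD : ∀ n, ∃ C : SoleckiBase, Disjoint C.val {x | PiNat.cylinder x n ⊆ U} := fun n => by
    refine (determinedBy_setOf_cylinder_subset U n).exists_soleckiBase_disjoint ?_
    have hsub : {x | PiNat.cylinder x n ⊆ U} ⊆ U := fun x hx => hx (PiNat.self_mem_cylinder x n)
    refine (measureReal_mono hsub).trans (ENNReal.toReal_mono (by simp) hU_half.le |>.trans_eq ?_)
    simp only [ENNReal.toReal_inv, ENNReal.toReal_ofNat, one_div]
  choose D hD using hD
  refine ⟨D, fun y hy => ?_⟩
  filter_upwards [eventually_cylinder_subset hU (hNU hy)] with n hn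
  exact fun hyD => Set.disjoint_left.1 (hD n) hyD hn

lemma finite_mem_SoleckiIdeal {A : Set SoleckiBase} (hA : A.Finite) : A ∈ SoleckiIdeal := by
  classical
  choose y hy using SoleckiBase.nonempty
  exact ⟨hA.toFinset.image y, fun C hC => mem_biUnion
    (Finset.mem_image_of_mem y (hA.mem_toFinset.2 hC)) (hy C)⟩

lemma finite_preimage_of_mem_SoleckiIdeal {A : Set SoleckiBase} {F : Finset (ℕ → Bool)}
    (hA : A ⊆ ⋃ y ∈ F, {C : SoleckiBase | y ∈ C.val}) {D : ℕ → SoleckiBase}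
    (hD : ∀ y ∈ F, ∀ᶠ n in atTop, y ∉ (D n).val) : (D ⁻¹' A).Finite := by
  have hfin : ∀ᶠ n in cofinite, n ∈ (D ⁻¹' A)ᶜ := by
    rw [Nat.cofinite_eq_atTop]
    filter_upwards [(Finset.eventually_all F).2 hD] with n hn hnA
    obtain ⟨y, hyF, hy⟩ := mem_iUnion₂.1 (hA hnA)
    exact hn y hyF hy
  exact compl_compl (D ⁻¹' A) ▸ mem_cofinite.1 hfin

lemma exists_countable_forall_exists_leStar {A : Set (ℕ → SoleckiBase)}
    (hA : A ∈ MIdeal SoleckiIdeal) :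
    ∃ B : Set (ℕ → Bool), B.Countable ∧ ∀ D : ℕ → SoleckiBase,
      (∀ y ∈ B, ∀ᶠ n in atTop, y ∉ (D n).val) → ∃ g, ∀ f : ℕ → ℕ, D ∘ f ∈ A → LeStar f g := by
  obtain ⟨φ, hφ, hA⟩ := hA
  choose F hF using hφ
  refine ⟨⋃ k, ⋃ u, F k u, countable_iUnion fun k => countable_iUnion fun u =>
    (F k u).countable_toSet, fun D hD => ?_⟩
  obtain ⟨g, hg⟩ := exists_leStar_of_seg_finite fun k u =>
    finite_preimage_of_mem_SoleckiIdeal (hF k u) fun y hy => hD y (mem_iUnion₂.2 ⟨k, u, hy⟩)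
  exact ⟨g, fun f hf => let ⟨k, hk⟩ := mem_iUnion.1 (hA hf); hg f k hk⟩

lemma tukeyLE_orSeq_MIdeal_SoleckiIdeal :
    TukeyLE (orSeq (escapeRel coinMeasure) LeStar) (memRel (MIdeal SoleckiIdeal)) := by
  choose D hD using fun N : {N // coinMeasure N = 0} => exists_soleckiBase_eventually_notMem N.2
  choose B hB hBg using fun A : {A // A ∈ MIdeal SoleckiIdeal} =>
    exists_countable_forall_exists_leStar A.2
  have hg : ∀ A N, ∃ g, B A ⊆ N.1 → ∀ f : ℕ → ℕ, D N ∘ f ∈ A.1 → LeStar f g := fun A N => by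
    by_cases hBN : B A ⊆ N.1
    · obtain ⟨g, hg⟩ := hBg A (D N) fun y hy => hD N y (hBN hy)
      exact ⟨g, fun _ => hg⟩
    · exact ⟨0, fun h => absurd h hBN⟩
  choose g hg using hg
  exact ⟨fun p => D p.1 ∘ p.2, fun A => (⟨B A, hB A⟩, g A), fun p A hp =>
    or_iff_not_imp_left.2 fun h => hg A p.1 (not_not.1 h) p.2 hp⟩

lemma infinitePi_frequently_notMem_eq_zero {Y : Type*} [MeasurableSpace Y] {ν : Measure Y}
    [IsProbabilityMeasure ν] {C : ℕ → Set Y} (hC : ∀ n, MeasurableSet (C n)) {r : ℝ≥0∞}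
    (hr : r < 1) (hCr : ∀ n, ν (C n)ᶜ ≤ r) :
    Measure.infinitePi (fun _ : ℕ => ν) {q | ∃ᶠ n in atTop, ∀ j < n, q j ∉ C n} = 0 := by
  refine measure_setOfPred_frequently_eq_zero (ne_top_of_le_ne_top ?_
    (ENNReal.tsum_le_tsum (g := fun n => r ^ n) fun n => ?_))
  · rw [ENNReal.tsum_geometric]
    exact ENNReal.inv_ne_top.2 (tsub_pos_of_lt hr).ne'
  · have hpi : {q : ℕ → Y | ∀ j < n, q j ∉ C n} = (Finset.range n : Set ℕ).pi fun _ => (C n)ᶜ := by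
      ext q
      simp only [mem_ofPred_eq, Set.mem_pi, Finset.mem_coe, Finset.mem_range, mem_compl_iff]
    rw [hpi, Measure.infinitePi_pi _ fun _ _ => (hC n).compl, Finset.prod_const, Finset.card_range]
    gcongr
    exact hCr n

lemma setOf_exists_mem_mem_SoleckiIdeal (b : ℕ → ℕ → ℕ → Bool) (n : ℕ) :
    {C : SoleckiBase | ∃ i ≤ n, ∃ j < n, b i j ∈ C.val} ∈ SoleckiIdeal := by
  classical
  refine ⟨Finset.image₂ b (Finset.range (n + 1)) (Finset.range n), ?_⟩
  rintro C ⟨i, hi, j, hj, hC⟩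
  exact mem_biUnion (Finset.mem_image₂_of_mem (Finset.mem_range_succ_iff.2 hi)
    (Finset.mem_range.2 hj)) hC

lemma tukeyLE_KIdeal_SoleckiIdeal_escapeRel :
    TukeyLE (memRel (KIdeal SoleckiIdeal))
      (escapeRel (Measure.infinitePi fun _ : ℕ => coinMeasure)) := by
  have hnull : ∀ x : ℕ → SoleckiBase, Measure.infinitePi (fun _ : ℕ => coinMeasure)
      {q | ∃ᶠ n in atTop, ∀ j < n, q j ∉ (x n).val} = 0 := fun x =>
    infinitePi_frequently_notMem_eq_zero (fun n => (x n).isClopen.2.measurableSet)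
      ENNReal.one_half_lt_one fun n => (x n).coinMeasure_compl.le
  choose b hb using fun B : {B : Set (ℕ → ℕ → Bool) // B.Countable} =>
    countable_iff_exists_subset_range.1 B.2
  refine ⟨fun x => ⟨_, hnull x⟩,
    fun B => ⟨_, setOf_eventually_mem_mem_KIdeal (setOf_exists_mem_mem_SoleckiIdeal (b B))⟩,
    fun x B hxB => ?_⟩
  obtain ⟨q, hqB, hq⟩ := not_subset.1 hxB
  obtain ⟨i, rfl⟩ := hb B hqB
  filter_upwards [not_frequently.1 hq, eventually_ge_atTop i] with n hn hin
  push Not at hn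
  exact ⟨i, hin, hn⟩

end Solecki

/-- For the Solecki ideal `𝒮`:
`non(M_𝒮) = non(K_𝒮) = max {𝔟, cov_ω(𝒩)}` and `cov(M_𝒮) = cov(K_𝒮) = min {𝔡, non(𝒩)}`. -/
theorem stmt17 :
    nonIdeal (MIdeal SoleckiIdeal) = nonIdeal (KIdeal SoleckiIdeal) ∧
    nonIdeal (MIdeal SoleckiIdeal) = max bNum covOmegaNull ∧
    covIdeal (MIdeal SoleckiIdeal) = covIdeal (KIdeal SoleckiIdeal) ∧
    covIdeal (MIdeal SoleckiIdeal) = min dNum nonNullReal := by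
  have hseq := (tukeyLE_escapeRel coinMeasure (MeasureTheory.volume : MeasureTheory.Measure ℝ)
    |>.orSeq_left LeStar).trans tukeyLE_orSeq_MIdeal_SoleckiIdeal
  have hKM := tukeyLE_memRel_of_subset (KIdeal_subset_MIdeal SoleckiIdeal)
  have hbound := tukeyLE_KIdeal_leStar fun _ => finite_mem_SoleckiIdeal
  have hnull := tukeyLE_KIdeal_SoleckiIdeal_escapeRel.trans
    (tukeyLE_escapeRel (MeasureTheory.volume : MeasureTheory.Measure ℝ) _)
  obtain ⟨hnonM, hnonK⟩ := unboundedNum_eq_max_of_tukeyLE hseq hKM hnull hbound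
    exists_not_escapeRel (fun g => ⟨_, not_leStar_add_one g⟩) aleph0_le_unboundedNum_leStar
  obtain ⟨hcovM, hcovK⟩ := dominatingNum_eq_min_of_tukeyLE hseq hKM hnull hbound
    exists_escapeRel fun f => ⟨f, leStar_refl f⟩
  rw [unboundedNum_escapeRel, max_comm] at hnonM hnonK
  rw [dominatingNum_escapeRel, min_comm] at hcovM hcovK
  rw [nonIdeal_eq_unboundedNum (isLowerSet_MIdeal _),
    nonIdeal_eq_unboundedNum (isLowerSet_KIdeal _), covIdeal_eq_dominatingNum,
    covIdeal_eq_dominatingNum]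
  exact ⟨hnonM.trans hnonK.symm, hnonM, hcovM.trans hcovK.symm, hcovM⟩

end
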